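/- Assume additionally that c_j ≠ c for all 1 < j < l. Then the Benlolo–Sanderson element f is irreducible in the polynomial ring R (in particular f is nonzero and not a unit). -/

import Mathlib

open Finset MvPolynomial

noncomputable section

/-- Sum of the first `j` block sizes (blocks are 1-indexed). -/
def blkSum (c : ℕ → ℕ) (j : ℕ) : ℕ := ∑ i ∈ Finset.Icc 1 j, c i

/-- Block index of `a ∈ {1,…,n}`: the least `j` with `a ≤ c 1 + ⋯ + c j`. -/
def blk (c : ℕ → ℕ) (a : ℕ) : ℕ := sInf {j | a ≤ blkSum c j}

/-- The index set `P` of positions of the nilradical `m`: pairs `(a, b)` of indices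
(0-indexed here, representing the 1-indexed pair `(a+1, b+1)`) with `b < a` and
`blk (b+1) < blk (a+1)`. -/
abbrev Pos (c : ℕ → ℕ) (n : ℕ) : Type :=
  {p : Fin n × Fin n // p.2 < p.1 ∧ blk c (p.2.1 + 1) < blk c (p.1.1 + 1)}

/-- The generic matrix `𝒳` of the nilradical `m`. -/
def genX (c : ℕ → ℕ) (n : ℕ) : Matrix (Fin n) (Fin n) (MvPolynomial (Pos c n) ℂ) :=
  Matrix.of fun a b =>
    if h : b < a ∧ blk c (b.1 + 1) < blk c (a.1 + 1) then X (⟨(a, b), h⟩ : Pos c n) else 0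

/-- The matrix `M(t)`: the `(n-c) × (n-c)` submatrix of `𝒳 + t · Id` consisting of
rows `c+1, …, n` and columns `1, …, n-c`, viewed over `R[t]`.  Here `m = n - c`. -/
def Mmat (c : ℕ → ℕ) (n m : ℕ) (h : m + c 1 = n) :
    Matrix (Fin m) (Fin m) (Polynomial (MvPolynomial (Pos c n) ℂ)) :=
  Matrix.of fun i j =>
    Polynomial.C (genX c n (Fin.cast h (i.addNat (c 1)))
        (Fin.castLE (le_trans (Nat.le_add_right m (c 1)) (le_of_eq h)) j))
      + if (Fin.cast h (i.addNat (c 1)) : Fin n)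
            = Fin.castLE (le_trans (Nat.le_add_right m (c 1)) (le_of_eq h)) j
        then Polynomial.X else 0

/-- `d := Σᵢ max (cᵢ - c, 0)` (truncated subtraction). -/
def dBS (c : ℕ → ℕ) (l : ℕ) : ℕ := ∑ i ∈ Finset.Icc 1 l, (c i - c 1)

/-- The Benlolo–Sanderson element: the coefficient of `t^d` in `det M(t)`. -/
def BSf (c : ℕ → ℕ) (l n m : ℕ) (h : m + c 1 = n) : MvPolynomial (Pos c n) ℂ :=
  ((Mmat c n m h).det).coeff (dBS c l)

/-- The point of the nilradical determined by `ξ : P → ℂ`. -/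
def Xpt (c : ℕ → ℕ) (n : ℕ) (ξ : Pos c n → ℂ) : Matrix (Fin n) (Fin n) ℂ :=
  Matrix.of fun a b =>
    if h : b < a ∧ blk c (b.1 + 1) < blk c (a.1 + 1) then ξ ⟨(a, b), h⟩ else 0


/-- Abstract combinatorial data. -/
structure BSDat (ι V : Type) [Fintype ι] [DecidableEq ι] where
  L : ι → ℕ
  R : ι → ℕ
  D : ι → ι → Prop
  r : V → ι
  q : V → ι
  l : ℕ
  c : ℕ
  cc : ℕ → ℕ
  hl : 2 ≤ l
  hc : 0 < c
  hD : ∀ i j, D i j → R i = L j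
  hD1 : ∀ i j j', D i j → D i j' → j = j'
  hD2 : ∀ i i' j, D i j → D i' j → i = i'
  hDc : ∀ j, 2 ≤ L j → ∃ i, D i j
  hDr : ∀ i, R i < l → ∃ j, D i j
  hL1 : ∀ j, 1 ≤ L j
  hLl : ∀ j, L j < l
  hR2 : ∀ i, 2 ≤ R i
  hRl : ∀ i, R i ≤ l
  hgap : ∀ k, 1 ≤ k → k < l → #{j | L j ≤ k} = #{i | R i ≤ k} + c
  hcL : ∀ k, 1 < k → k < l → #{j | L j = k} = cc k
  hcR : ∀ k, 1 < k → k < l → #{i | R i = k} = cc k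
  hinj : ∀ v v', r v = r v' → q v = q v' → v = v'
  hQ : ∀ v, L (q v) < R (r v)
  hsurj : ∀ i j, L j < R i → ∃ v, r v = i ∧ q v = j

namespace BSDat
open Classical

variable {ι V : Type} [Fintype ι] [DecidableEq ι] (S : BSDat ι V)

def Val (τ : Equiv.Perm ι) : Prop := ∀ j, S.L j < S.R (τ j) ∨ S.D (τ j) j

def F (τ : Equiv.Perm ι) : Finset ι := {j | S.D (τ j) j}

variable {S}

theorem mem_F {τ : Equiv.Perm ι} {j : ι} : j ∈ S.F τ ↔ S.D (τ j) j := by simp [F]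

theorem Val.le {τ : Equiv.Perm ι} (h : S.Val τ) (j : ι) : S.L j ≤ S.R (τ j) := by
  rcases h j with h | h
  · exact h.le
  · exact (S.hD _ _ h).ge

theorem notD {i j : ι} (h : S.L j < S.R i) : ¬ S.D i j := fun h' => by
  have := S.hD _ _ h'; omega

theorem gap {τ : Equiv.Perm ι} (h : S.Val τ) {k : ℕ} (h1 : 1 ≤ k) (h2 : k < S.l) :
    #{j | S.L j ≤ k ∧ k < S.R (τ j)} = S.c := by
  have e1 := S.hgap k h1 h2
  have e2 : #{j | S.R (τ j) ≤ k} = #{i | S.R i ≤ k} := by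
    apply Finset.card_bij (fun j _ => τ j)
    · simp
    · simp
    · intro b hb
      exact ⟨τ.symm b, by simpa using hb, by simp⟩
  have e3 : ({j | S.L j ≤ k} : Finset ι) =
      ({j | S.R (τ j) ≤ k} : Finset ι) ∪ ({j | S.L j ≤ k ∧ k < S.R (τ j)} : Finset ι) := by
    ext j
    have := h.le j
    simp only [mem_filter, mem_univ, true_and, mem_union]
    omega
  rw [e3, card_union_of_disjoint] at e1
  · omega
  · rw [Finset.disjoint_filter]
    intro j _ h1 h2
    omega

theorem jump {τ : Equiv.Perm ι} (h : S.Val τ) {k : ℕ} (h1 : 1 < k) (h2 : k < S.l)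
    (h3 : S.cc k < S.c + #{j ∈ S.F τ | S.L j = k}) : ∃ j, S.L j < k ∧ k < S.R (τ j) := by
  by_contra! hcon
  have e1 := gap h (k := k - 1) (by omega) (by omega)
  have e2 := S.hcR k h1 h2
  have e3 : #(({j | S.L j ≤ k - 1 ∧ k - 1 < S.R (τ j)} : Finset ι) ∪ {j ∈ S.F τ | S.L j = k})
     ≤ #{i | S.R i = k} := by
    apply Finset.card_le_card_of_injOn τ
    · intro j hj
      simp only [coe_union, coe_filter, mem_univ, true_and, Set.mem_union, Set.mem_ofPred_eq, F,
        mem_filter] at hj ⊢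
      rcases hj with hj | hj
      · have := hcon j (by omega)
        omega
      · rw [S.hD _ _ hj.1, hj.2]
    · exact τ.injective.injOn
  rw [card_union_of_disjoint] at e3
  · omega
  · rw [Finset.disjoint_left]
    intro j hj hj'
    simp only [mem_filter, mem_univ, true_and] at hj hj'
    omega

theorem fixed {τ : Equiv.Perm ι} (h : S.Val τ) {k : ℕ} (h1 : 1 < k) (h2 : k < S.l) :
    S.cc k ≤ S.c + #{j ∈ S.F τ | S.L j = k} := by
  rw [← gap h h1.le h2, ← S.hcL k h1 h2]
  refine le_trans (card_le_card ?_) (card_union_le _ _)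
  intro j
  simp only [mem_filter, mem_univ, true_and, mem_union, F]
  intro hj
  rcases h j with h | h
  · left; omega
  · right; exact ⟨h, hj⟩

theorem cardF {τ : Equiv.Perm ι} :
    #(S.F τ) = ∑ k ∈ Finset.Ioo 1 S.l, #{j ∈ S.F τ | S.L j = k} := by
  apply Finset.card_eq_sum_card_fiberwise
  intro j hj
  simp only [F, coe_filter, mem_univ, true_and, Set.mem_ofPred_eq] at hj
  have := S.hD _ _ hj
  have := S.hR2 (τ j)
  have := S.hLl j
  simp only [coe_Ioo, Set.mem_Ioo]
  omega

variable (S) in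
def d : ℕ := ∑ k ∈ Finset.Ioo 1 S.l, (S.cc k - S.c)

variable (S) in
def T (τ : Equiv.Perm ι) : Prop := S.Val τ ∧ #(S.F τ) = S.d

theorem exists_T_aux (N : ℕ) : ∀ τ : Equiv.Perm ι, S.Val τ → #(S.F τ) = S.d + N → ∃ τ, S.T τ := by
  induction N with
  | zero => intro τ h1 h2; exact ⟨τ, h1, h2⟩
  | succ N ih =>
    intro τ h1 h2
    have : S.d < #(S.F τ) := by omega
    rw [cardF, d] at this
    obtain ⟨k, hk, hk'⟩ := Finset.exists_lt_of_sum_lt this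
    rw [Finset.mem_Ioo] at hk
    obtain ⟨j, hj1, hj2⟩ := jump h1 hk.1 hk.2 (by omega)
    obtain ⟨a, ha⟩ : ({j ∈ S.F τ | S.L j = k} : Finset ι).Nonempty := by
      rw [← Finset.card_pos]; omega
    simp only [F, mem_filter, mem_univ, true_and] at ha
    obtain ⟨ha, hak⟩ := ha
    have haR := S.hD _ _ ha
    have hja : j ≠ a := by rintro rfl; omega
    have hF : S.F (τ * Equiv.swap j a) = (S.F τ).erase a := by
      ext x
      rw [mem_erase, mem_F, mem_F, Equiv.Perm.mul_apply]
      by_cases hx : x = j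
      · subst hx
        rw [Equiv.swap_apply_left]
        have t1 : ¬ S.D (τ a) x := notD (by omega)
        have t2 : ¬ S.D (τ x) x := notD (by omega)
        simp [t1, t2]
      by_cases hx' : x = a
      · subst hx'
        rw [Equiv.swap_apply_right]
        have t1 : ¬ S.D (τ j) x := notD (by omega)
        simp [t1]
      rw [Equiv.swap_apply_of_ne_of_ne hx hx']
      simp [hx']
    refine ih (τ * Equiv.swap j a) ?_ ?_
    · intro x
      rw [Equiv.Perm.mul_apply]
      by_cases hx : x = j
      · subst hx
        rw [Equiv.swap_apply_left]
        left; omega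
      by_cases hx' : x = a
      · subst hx'
        rw [Equiv.swap_apply_right]
        left; omega
      rw [Equiv.swap_apply_of_ne_of_ne hx hx']
      exact h1 x
    · rw [hF, Finset.card_erase_of_mem]
      · omega
      · simpa [F] using ha

theorem exists_T {τ : Equiv.Perm ι} (h : S.Val τ) : ∃ τ, S.T τ := by
  have : S.d ≤ #(S.F τ) := by
    rw [cardF, d]
    apply Finset.sum_le_sum
    intro k hk
    rw [Finset.mem_Ioo] at hk
    have := fixed h hk.1 hk.2
    omega
  obtain ⟨N, hN⟩ := Nat.exists_eq_add_of_le this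
  exact exists_T_aux N τ h hN

theorem swap_T {τ : Equiv.Perm ι} (h : S.T τ) {j j' : ι}
    (h1 : S.L j < S.R (τ j)) (h2 : S.L j' < S.R (τ j'))
    (h3 : S.L j < S.R (τ j')) (h4 : S.L j' < S.R (τ j)) : S.T (τ * Equiv.swap j j') := by
  have key : ∀ x, (S.D ((τ * Equiv.swap j j') x) x ↔ S.D (τ x) x) ∧
      (S.L x < S.R ((τ * Equiv.swap j j') x) ↔ S.L x < S.R (τ x)) := by
    intro x
    rw [Equiv.Perm.mul_apply]
    by_cases hx : x = j
    · subst hx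
      rw [Equiv.swap_apply_left]
      simp [notD h1, notD h3, h1, h3]
    by_cases hx' : x = j'
    · subst hx'
      rw [Equiv.swap_apply_right]
      simp [notD h2, notD h4, h2, h4]
    rw [Equiv.swap_apply_of_ne_of_ne hx hx']
    simp
  refine ⟨fun x => ?_, ?_⟩
  · rw [(key x).1, (key x).2]; exact h.1 x
  · rw [← h.2]
    congr 1
    ext x
    rw [mem_F, mem_F, (key x).1]

/-- `j → a → b`, `a'` fixed, is replaced by `j → a' → b` with `a` fixed. -/
theorem big_T {τ : Equiv.Perm ι} (h : S.T τ) {j a a' : ι} (hj : S.D (τ j) a)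
    (hja : j ≠ a) (ha' : S.D (τ a') a') (hL : S.L a = S.L a') (haa : a ≠ a') :
    ∃ τ', S.T τ' ∧ τ' j = τ a' ∧ τ' a' = τ a ∧ τ' a = τ j := by
  have hja' : j ≠ a' := by
    rintro rfl
    exact haa (S.hD1 _ _ _ hj ha')
  let ρ : Equiv.Perm ι := τ * (Equiv.swap j a' * Equiv.swap a' a)
  have r1 : ρ j = τ a' := by
    simp only [ρ, Equiv.Perm.mul_apply]
    rw [Equiv.swap_apply_of_ne_of_ne hja' hja, Equiv.swap_apply_left]
  have r2 : ρ a' = τ a := by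
    simp only [ρ, Equiv.Perm.mul_apply]
    rw [Equiv.swap_apply_left, Equiv.swap_apply_of_ne_of_ne hja.symm haa]
  have r3 : ρ a = τ j := by
    simp only [ρ, Equiv.Perm.mul_apply]
    rw [Equiv.swap_apply_right, Equiv.swap_apply_right]
  have r4 : ∀ x, x ≠ j → x ≠ a → x ≠ a' → ρ x = τ x := by
    intro x h1 h2 h3
    simp only [ρ, Equiv.Perm.mul_apply]
    rw [Equiv.swap_apply_of_ne_of_ne h3 h2, Equiv.swap_apply_of_ne_of_ne h1 h3]
  have hRa := S.hD _ _ hj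
  have hRa' := S.hD _ _ ha'
  have nj : ¬ S.D (τ j) j := fun h' => hja (S.hD1 _ _ _ h' hj)
  have nj2 : ¬ S.D (τ a') j := fun h' => hja' (S.hD1 _ _ _ h' ha')
  have na : ¬ S.D (τ a) a := fun h' => hja (τ.injective (S.hD2 _ _ _ hj h'))
  have na2 : ¬ S.D (τ a) a' := fun h' => haa (τ.injective (S.hD2 _ _ _ h' ha'))
  have qj := (h.1 j).resolve_right nj
  have qa := (h.1 a).resolve_right na
  refine ⟨ρ, ⟨?_, ?_⟩, r1, r2, r3⟩
  · intro x
    by_cases h1 : x = j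
    · subst h1; left; rw [r1]; omega
    by_cases h2 : x = a
    · subst h2; right; rw [r3]; exact hj
    by_cases h3 : x = a'
    · subst h3; left; rw [r2]; omega
    rw [r4 x h1 h2 h3]; exact h.1 x
  · rw [← h.2]
    have : S.F ρ = insert a ((S.F τ).erase a') := by
      ext x
      simp only [F, mem_filter, mem_univ, true_and, mem_erase, mem_insert]
      by_cases h1 : x = j
      · subst h1; rw [r1]; simp [nj2, hja, nj]
      by_cases h2 : x = a
      · subst h2; rw [r3]; simp [hj]
      by_cases h3 : x = a'
      · subst h3; rw [r2]; simp [na2, haa.symm]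
      rw [r4 x h1 h2 h3]; simp [h2, h3]
    rw [this, card_insert_of_notMem, card_erase_of_mem]
    · have : 0 < #(S.F τ) := card_pos.2 ⟨a', by simpa [F] using ha'⟩
      omega
    · simpa [F] using ha'
    · simp [F, na]

/-! ### Polynomial part -/

variable (S) in
def IsMu (τ : Equiv.Perm ι) (u : V →₀ ℕ) : Prop := ∀ v, u v = if τ (S.q v) = S.r v then 1 else 0

variable (S) in
/-- the support description -/
def Supp (f : MvPolynomial V ℂ) : Prop := ∀ u, u ∈ f.support ↔ ∃ τ, S.T τ ∧ S.IsMu τ u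

structure Fac (S : BSDat ι V) (f g h : MvPolynomial V ℂ) : Prop where
  hS : S.Supp f
  hf : f = g * h
  h0 : f ≠ 0

variable {f g h : MvPolynomial V ℂ}

theorem Fac.symm (H : S.Fac f g h) : S.Fac f h g := ⟨H.hS, H.hf.trans (mul_comm _ _), H.h0⟩

theorem Fac.disj (H : S.Fac f g h) {x : V} {u v : V →₀ ℕ} (hu : u ∈ g.support)
    (hv : v ∈ h.support) (hux : u x ≠ 0) (hvx : v x ≠ 0) : False := by
  have hg0 : g ≠ 0 := by rintro rfl; exact H.h0 (by rw [H.hf, zero_mul])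
  have hh0 : h ≠ 0 := by rintro rfl; exact H.h0 (by rw [H.hf, mul_zero])
  have h1 : degreeOf x f = degreeOf x g + degreeOf x h := by
    rw [H.hf, degreeOf_mul_eq hg0 hh0]
  have h2 : degreeOf x f ≤ 1 := by
    rw [degreeOf_le_iff]
    intro w hw
    obtain ⟨τ, -, hτ⟩ := (H.hS w).1 hw
    rw [hτ]; split_ifs <;> simp
  have h3 := monomial_le_degreeOf x hu
  have h4 := monomial_le_degreeOf x hv
  omega

theorem Fac.add (H : S.Fac f g h) {u v : V →₀ ℕ} (hu : u ∈ g.support)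
    (hv : v ∈ h.support) : u + v ∈ f.support := by
  rw [mem_support_iff, H.hf, coeff_mul, Finset.sum_eq_single (u, v)]
  · exact mul_ne_zero (mem_support_iff.1 hu) (mem_support_iff.1 hv)
  · rintro ⟨u', v'⟩ huv hne
    by_contra hcon
    have hu' : u' ∈ g.support := mem_support_iff.2 (left_ne_zero_of_mul hcon)
    have hv' : v' ∈ h.support := mem_support_iff.2 (right_ne_zero_of_mul hcon)
    rw [Finset.HasAntidiagonal.mem_antidiagonal] at huv
    simp only at huv
    have key : ∀ x, u' x = u x ∧ v' x = v x := by
      intro x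
      have e := DFunLike.congr_fun huv x
      simp only [Finsupp.add_apply] at e
      by_cases a1 : u x = 0 <;> by_cases a2 : v x = 0 <;> by_cases a3 : u' x = 0 <;>
        by_cases a4 : v' x = 0 <;> first
        | omega
        | exact (H.disj hu hv a1 a2).elim
        | exact (H.disj hu' hv' a3 a4).elim
        | exact (H.disj hu hv' a1 a4).elim
        | exact (H.disj hu' hv a3 a2).elim
    apply hne
    rw [Prod.mk.injEq]
    exact ⟨Finsupp.ext fun x => (key x).1, Finsupp.ext fun x => (key x).2⟩
  · intro hn
    exact (hn (by simp)).elim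

theorem Fac.split (H : S.Fac f g h) {τ : Equiv.Perm ι} (hτ : S.T τ) [Finite V] :
    ∃ u ∈ g.support, ∃ v ∈ h.support, S.IsMu τ (u + v) := by
  let w : V →₀ ℕ := Finsupp.equivFunOnFinite.symm fun v => if τ (S.q v) = S.r v then 1 else 0
  have hw : S.IsMu τ w := fun v => by simp [w]
  have : w ∈ f.support := (H.hS w).2 ⟨τ, hτ, hw⟩
  rw [H.hf] at this
  obtain ⟨u, hu, v, hv, e⟩ := Finset.mem_add.1 (support_mul _ _ this)
  exact ⟨u, hu, v, hv, e ▸ hw⟩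

/-- variable `x` occurs in `g` -/
def Occ (g : MvPolynomial V ℂ) (x : V) : Prop := ∃ u ∈ g.support, u x ≠ 0

theorem Fac.line (H : S.Fac f g h) {x y : V} (hx : Occ g x) (hy : Occ h y) :
    S.r x ≠ S.r y ∧ S.q x ≠ S.q y := by
  obtain ⟨u, hu, hux⟩ := hx
  obtain ⟨v, hv, hvy⟩ := hy
  obtain ⟨τ, -, hτ⟩ := (H.hS _).1 (H.add hu hv)
  have e1 := hτ x
  have e2 := hτ y
  rw [Finsupp.add_apply] at e1 e2
  have t1 : τ (S.q x) = S.r x := by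
    by_contra hne; rw [if_neg hne] at e1; omega
  have t2 : τ (S.q y) = S.r y := by
    by_contra hne; rw [if_neg hne] at e2; omega
  have hxy : x ≠ y := by
    rintro rfl
    exact H.disj hu hv hux hvy
  constructor
  · intro hr
    apply hxy
    exact S.hinj _ _ hr (τ.injective (by rw [t1, t2, hr]))
  · intro hq
    apply hxy
    exact S.hinj _ _ (by rw [← t1, ← t2, hq]) hq

theorem Fac.occ [Finite V] (H : S.Fac f g h) {τ : Equiv.Perm ι} (hτ : S.T τ) {x : V}
    (hx : τ (S.q x) = S.r x) : Occ g x ∨ Occ h x := by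
  obtain ⟨u, hu, v, hv, e⟩ := H.split hτ
  have e1 := e x
  rw [if_pos hx, Finsupp.add_apply] at e1
  by_cases h0 : u x = 0
  · right; exact ⟨v, hv, by omega⟩
  · left; exact ⟨u, hu, h0⟩

theorem Fac.not_both (H : S.Fac f g h) {x : V} (h1 : Occ g x) (h2 : Occ h x) : False :=
  (H.line h1 h2).1 rfl

theorem Fac.swap [Finite V] (H : S.Fac f g h) {τ : Equiv.Perm ι} (hτ : S.T τ) {x y : V}
    (hx : τ (S.q x) = S.r x) (hy : τ (S.q y) = S.r y)
    (h3 : S.L (S.q x) < S.R (S.r y)) (h4 : S.L (S.q y) < S.R (S.r x))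
    (gx : Occ g x) : Occ g y := by
  refine (H.occ hτ hy).resolve_right fun hy' => ?_
  have hne : S.q x ≠ S.q y := (H.line gx hy').2
  have := swap_T hτ (j := S.q x) (j' := S.q y) (by rw [hx]; exact S.hQ x) (by rw [hy]; exact S.hQ y)
    (by rw [hy]; exact h3) (by rw [hx]; exact h4)
  obtain ⟨z, z1, z2⟩ := S.hsurj _ _ h4
  have hz : (τ * Equiv.swap (S.q x) (S.q y)) (S.q z) = S.r z := by
    rw [z1, z2, Equiv.Perm.mul_apply, Equiv.swap_apply_right, hx]
  rcases H.occ this hz with hz | hz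
  · exact (H.line hz hy').2 z2
  · exact (H.line gx hz).1 z1.symm

theorem Fac.big [Finite V] (H : S.Fac f g h) {τ : Equiv.Perm ι} (hτ : S.T τ) {x y : V} {a' : ι}
    (hx : τ (S.q x) = S.r x) (hy : τ (S.q y) = S.r y)
    (hxy : S.D (S.r x) (S.q y)) (ha' : S.D (τ a') a') (hL : S.L (S.q y) = S.L a')
    (gx : Occ g x) : Occ g y := by
  refine (H.occ hτ hy).resolve_right fun hy' => ?_
  have hne : S.q x ≠ S.q y := (H.line gx hy').2
  have haa : S.q y ≠ a' := by
    rintro rfl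
    exact notD (S.hQ y) (hy ▸ ha')
  obtain ⟨τ', hτ', t1, t2, t3⟩ := big_T hτ (j := S.q x) (a := S.q y) (by rw [hx]; exact hxy)
    hne ha' hL haa
  have hR1 := S.hD _ _ hxy
  have hR2 := S.hD _ _ ha'
  have hQx := S.hQ x
  have hQy := S.hQ y
  obtain ⟨z1, z1r, z1q⟩ := S.hsurj (τ a') (S.q x) (by omega)
  obtain ⟨z2, z2r, z2q⟩ := S.hsurj (τ (S.q y)) a' (by rw [hy]; omega)
  have o1 : Occ g z1 := by
    refine (H.occ hτ' (x := z1) (by rw [z1r, z1q, t1])).resolve_right fun hz => ?_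
    exact (H.line gx hz).2 z1q.symm
  have o2 : Occ h z2 := by
    refine (H.occ hτ' (x := z2) (by rw [z2r, z2q, t2])).resolve_left fun hz => ?_
    exact (H.line hz hy').1 (by rw [z2r, hy])
  obtain ⟨u, hu, v, hv, e⟩ := H.split hτ
  obtain ⟨u', hu', v', hv', e'⟩ := H.split hτ'
  obtain ⟨ρ, hρ, eρ⟩ := (H.hS _).1 (H.add hu' hv)
  have hρ1 : ρ (S.q x) = τ a' := by
    by_contra hcon
    have a1 := eρ z1
    have a2 := e' z1
    rw [z1r, z1q, if_neg hcon, Finsupp.add_apply] at a1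
    rw [z1r, z1q, t1, if_pos rfl, Finsupp.add_apply] at a2
    exact H.not_both o1 ⟨v', hv', by omega⟩
  have hxa : S.q x ≠ a' := by
    rintro hh
    rw [hh] at hQx; omega
  have nD : ¬ S.D (ρ a') a' := fun hh =>
    hxa (ρ.injective (by rw [hρ1]; exact (S.hD2 _ _ _ hh ha').symm))
  obtain ⟨z, zr, zq⟩ := S.hsurj _ _ ((hρ.1 a').resolve_right nD)
  have b1 := eρ z
  have b2 := e z
  have b3 := e' z
  rw [zr, zq, if_pos rfl, Finsupp.add_apply] at b1
  rw [zr, zq, Finsupp.add_apply] at b2 b3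
  have n2 : τ a' ≠ ρ a' := fun hh => nD (hh ▸ ha')
  rw [if_neg n2] at b2
  have b4 : u' z = 1 := by omega
  have b5 : τ' a' = ρ a' := by
    by_contra hh; rw [if_neg hh] at b3; omega
  have : z = z2 := S.hinj _ _ (by rw [zr, z2r, ← b5, t2]) (by rw [zq, z2q])
  subst this
  exact H.not_both ⟨u', hu', by omega⟩ o2

/-- crossing edges of a gap: an edge `x` of `τ` crosses gap `k`. -/
theorem Fac.all [Finite V] (H : S.Fac f g h) (hne : ∀ k, 1 < k → k < S.l → S.cc k ≠ S.c)
    {τ : Equiv.Perm ι} (hτ : S.T τ)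
    {x : V} (hx : τ (S.q x) = S.r x) (gx : Occ g x) (hx1 : S.L (S.q x) ≤ 1) (k : ℕ) (hk : 1 ≤ k) :
    k < S.l → ∀ y, τ (S.q y) = S.r y → S.L (S.q y) ≤ k → k < S.R (S.r y) → Occ g y := by
  induction k, hk using Nat.le_induction with
  | base =>
    intro _ y hy y1 y2
    refine H.swap hτ hx hy ?_ ?_ gx
    · omega
    · have := S.hR2 (S.r x); omega
  | succ k hk ih =>
    intro hkl y hy y1 y2
    by_cases hyk : S.L (S.q y) ≤ k
    · exact ih (by omega) y hy hyk (by omega)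
    have hyk : S.L (S.q y) = k + 1 := by omega
    rcases lt_or_gt_of_ne (hne (k + 1) (by omega) hkl) with hs | hb
    · obtain ⟨j, hj1, hj2⟩ := jump hτ.1 (k := k + 1) (by omega) hkl (by omega)
      obtain ⟨z, zr, zq⟩ := S.hsurj (τ j) j (by omega)
      have hz : τ (S.q z) = S.r z := by rw [zr, zq]
      have gz := ih (by omega) z hz (by rw [zq]; omega) (by rw [zr]; omega)
      refine H.swap hτ hz hy ?_ ?_ gz
      · rw [zq]; omega
      · rw [zr]; omega
    · have := fixed hτ.1 (k := k + 1) (by omega) hkl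
      obtain ⟨a', ha'⟩ : ({j ∈ S.F τ | S.L j = k + 1} : Finset ι).Nonempty := by
        rw [← Finset.card_pos]; omega
      simp only [F, mem_filter, mem_univ, true_and] at ha'
      obtain ⟨i, hi⟩ := S.hDc (S.q y) (by omega)
      have hiR := S.hD _ _ hi
      have hjne : τ.symm i ≠ S.q y := by
        intro hh
        have : i = S.r y := by rw [← hy, ← hh]; simp
        subst this
        omega
      have hq : S.L (τ.symm i) < S.R (τ (τ.symm i)) := by
        refine (hτ.1 (τ.symm i)).resolve_right fun hh => hjne ?_
        rw [Equiv.apply_symm_apply] at hh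
        exact S.hD1 _ _ _ hh hi
      rw [Equiv.apply_symm_apply] at hq
      obtain ⟨z, zr, zq⟩ := S.hsurj _ _ hq
      have hz : τ (S.q z) = S.r z := by rw [zr, zq]; simp
      have gz := ih (by omega) z hz (by rw [zq]; omega) (by rw [zr]; omega)
      exact H.big hτ hz hy (by rw [zr]; exact hi) ha'.1 (by rw [hyk, ha'.2]) gz

theorem isUnit_of_not_occ {g : MvPolynomial V ℂ} (h0 : g ≠ 0) (h : ∀ x, ¬ Occ g x) :
    IsUnit g := by
  have : g = C (coeff 0 g) := by
    ext u
    rw [coeff_C]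
    split_ifs with hu
    · rw [← hu]
    · by_contra hc
      apply hu
      ext x
      by_contra hx
      exact h x ⟨u, mem_support_iff.2 hc, fun h' => hx (by simp [h'])⟩
  rw [this]
  apply IsUnit.map
  rw [isUnit_iff_ne_zero]
  intro hc
  rw [hc, map_zero] at this
  exact h0 this

theorem exists_cross {τ : Equiv.Perm ι} (hτ : S.T τ) :
    ∃ x, τ (S.q x) = S.r x ∧ S.L (S.q x) ≤ 1 := by
  have := gap hτ.1 (k := 1) le_rfl (by have := S.hl; omega)
  obtain ⟨j, hj⟩ : ({j | S.L j ≤ 1 ∧ 1 < S.R (τ j)} : Finset ι).Nonempty := by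
    rw [← Finset.card_pos, this]; exact S.hc
  simp only [mem_filter, mem_univ, true_and] at hj
  obtain ⟨z, zr, zq⟩ := S.hsurj (τ j) j (by omega)
  exact ⟨z, by rw [zr, zq], by rw [zq]; omega⟩

theorem irred [Finite V] (hS : S.Supp f) (hne : ∀ k, 1 < k → k < S.l → S.cc k ≠ S.c)
    (hex : ∃ τ, S.Val τ) : Irreducible f := by
  obtain ⟨τ₀, hτ₀⟩ := hex
  obtain ⟨τ, hτ⟩ := exists_T hτ₀
  let w : V →₀ ℕ := Finsupp.equivFunOnFinite.symm fun v => if τ (S.q v) = S.r v then 1 else 0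
  have hw : S.IsMu τ w := fun v => by simp [w]
  have hwf : w ∈ f.support := (hS w).2 ⟨τ, hτ, hw⟩
  have h0 : f ≠ 0 := by rintro rfl; simp at hwf
  obtain ⟨x, hx, hx1⟩ := exists_cross hτ
  refine ⟨?_, ?_⟩
  · intro hu
    obtain ⟨a, -, rfl⟩ := MvPolynomial.isUnit_iff_eq_C_of_isReduced.1 hu
    have e := hw x
    rw [if_pos hx] at e
    rw [mem_support_iff, coeff_C] at hwf
    split_ifs at hwf with h1
    · rw [← h1] at e; simp at e
    · exact hwf rfl
  · intro g h hf
    have H : S.Fac f g h := ⟨hS, hf, h0⟩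
    have hg0 : g ≠ 0 := by rintro rfl; exact h0 (by rw [hf, zero_mul])
    have hh0 : h ≠ 0 := by rintro rfl; exact h0 (by rw [hf, mul_zero])
    by_contra! hcon
    have ⟨z1, hz1⟩ : ∃ x, Occ g x := by
      by_contra! hc; exact hcon.1 (isUnit_of_not_occ hg0 hc)
    have ⟨z2, hz2⟩ : ∃ x, Occ h x := by
      by_contra! hc; exact hcon.2 (isUnit_of_not_occ hh0 hc)
    have ⟨u, hu, hu1⟩ := hz1
    have ⟨v, hv, hv1⟩ := hz2
    obtain ⟨ρ, hρ, eρ⟩ := (hS _).1 (H.add hu hv)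
    have p1 : ρ (S.q z1) = S.r z1 := by
      have := eρ z1
      by_contra hh; rw [if_neg hh, Finsupp.add_apply] at this; omega
    have p2 : ρ (S.q z2) = S.r z2 := by
      have := eρ z2
      by_contra hh; rw [if_neg hh, Finsupp.add_apply] at this; omega
    obtain ⟨y, hy, hy1⟩ := exists_cross hρ
    rcases H.occ hρ hy with oy | oy
    · have := H.all hne hρ hy oy hy1 (S.L (S.q z2)) (S.hL1 _) (S.hLl _) z2 p2 le_rfl (S.hQ _)
      exact H.not_both this hz2
    · have := H.symm.all hne hρ hy oy hy1 (S.L (S.q z1)) (S.hL1 _) (S.hLl _) z1 p1 le_rfl (S.hQ _)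
      exact H.not_both hz1 this

/-! ### Determinant -/

theorem mu_inj {τ τ' : Equiv.Perm ι} (h : S.Val τ) (h' : S.Val τ') {u : V →₀ ℕ}
    (e : S.IsMu τ u) (e' : S.IsMu τ' u) : τ = τ' := by
  ext j
  rcases h j with a | a
  · obtain ⟨z, zr, zq⟩ := S.hsurj _ _ a
    have e1 := e z
    have e2 := e' z
    rw [zr, zq, if_pos rfl] at e1
    rw [zr, zq, e1] at e2
    by_contra hc
    rw [if_neg (fun hh => hc hh.symm)] at e2
    omega
  rcases h' j with b | b
  · obtain ⟨z, zr, zq⟩ := S.hsurj _ _ b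
    have e1 := e' z
    have e2 := e z
    rw [zr, zq, if_pos rfl] at e1
    rw [zr, zq, e1] at e2
    by_contra hc
    rw [if_neg hc] at e2
    omega
  · exact S.hD2 _ _ _ a b

theorem supp_det [Fintype V] (A : Matrix ι ι (Polynomial (MvPolynomial V ℂ)))
    (hA1 : ∀ v, A (S.r v) (S.q v) = Polynomial.C (X v))
    (hA2 : ∀ i j, S.D i j → A i j = Polynomial.X)
    (hA3 : ∀ i j, ¬ S.D i j → ¬ S.L j < S.R i → A i j = 0) :
    S.Supp (A.det.coeff S.d) := by
  let μ : Equiv.Perm ι → V →₀ ℕ := fun τ =>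
    Finsupp.equivFunOnFinite.symm fun v => if τ (S.q v) = S.r v then 1 else 0
  have hμ : ∀ τ, S.IsMu τ (μ τ) := fun τ v => by simp [μ]
  have hμ' : ∀ τ u, S.IsMu τ u → u = μ τ := fun τ u hu => by
    ext v; rw [hu v, hμ τ v]
  have prodv : ∀ τ, S.Val τ → ∏ j, A (τ j) j =
      Polynomial.X ^ #(S.F τ) * Polynomial.C (monomial (μ τ) 1) := by
    intro τ hτ
    rw [← Finset.prod_filter_mul_prod_filter_not univ (fun j => S.D (τ j) j)]
    congr 1
    · rw [F]
      apply Finset.prod_eq_pow_card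
      intro j hj
      simp only [mem_filter, mem_univ, true_and] at hj
      exact hA2 _ _ hj
    · rw [MvPolynomial.monomial_eq, map_one, one_mul, Finsupp.prod_fintype _ _ (by simp), map_prod]
      have : ∀ v, (Polynomial.C (X v ^ (μ τ) v : MvPolynomial V ℂ)) =
          if τ (S.q v) = S.r v then A (S.r v) (S.q v) else 1 := by
        intro v
        rw [hμ τ v, hA1]
        split_ifs <;> simp
      simp only [this]
      rw [← Finset.prod_filter]
      symm
      apply Finset.prod_bij (fun v _ => S.q v)
      · intro v hv
        simp only [mem_filter, mem_univ, true_and] at hv ⊢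
        rw [hv]; exact notD (S.hQ v)
      · intro v hv v' hv' hq
        simp only [mem_filter, mem_univ, true_and] at hv hv'
        exact S.hinj _ _ (by rw [← hv, ← hv', hq]) hq
      · intro j hj
        simp only [mem_filter, mem_univ, true_and] at hj
        obtain ⟨v, vr, vq⟩ := S.hsurj _ _ ((hτ j).resolve_right hj)
        exact ⟨v, by simp [vr, vq], vq⟩
      · intro v hv
        simp only [mem_filter, mem_univ, true_and] at hv
        rw [hv]
  have coeffv : ∀ τ, (∏ j, A (τ j) j).coeff S.d = if S.T τ then monomial (μ τ) 1 else 0 := by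
    intro τ
    by_cases hv : S.Val τ
    · rw [prodv τ hv, Polynomial.coeff_mul_C, Polynomial.coeff_X_pow]
      by_cases hd : #(S.F τ) = S.d
      · rw [if_pos hd.symm, if_pos ⟨hv, hd⟩, one_mul]
      · rw [if_neg (Ne.symm hd), if_neg (fun hh => hd hh.2), zero_mul]
    · rw [if_neg (fun hh => hv hh.1)]
      unfold Val at hv
      push Not at hv
      obtain ⟨j, hj1, hj2⟩ := hv
      have hz : ∏ j, A (τ j) j = 0 := Finset.prod_eq_zero (mem_univ j) (hA3 _ _ hj2 (by omega))
      rw [hz, Polynomial.coeff_zero]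
  have total : A.det.coeff S.d = ∑ τ : Equiv.Perm ι,
      if S.T τ then monomial (μ τ) (((Equiv.Perm.sign τ : ℤ) : ℂ)) else 0 := by
    rw [Matrix.det_apply', Polynomial.finsetSum_coeff]
    apply Finset.sum_congr rfl
    intro τ _
    rw [← map_intCast (Polynomial.C : MvPolynomial V ℂ →+* _), Polynomial.coeff_C_mul, coeffv]
    split_ifs
    · rw [← map_intCast (C : ℂ →+* MvPolynomial V ℂ), C_mul_monomial, mul_one]
    · rw [mul_zero]
  intro u
  rw [mem_support_iff, total, coeff_sum]
  constructor
  · intro hne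
    obtain ⟨τ, -, hτ⟩ := Finset.exists_ne_zero_of_sum_ne_zero hne
    split_ifs at hτ with hT
    · rw [coeff_monomial] at hτ
      split_ifs at hτ with hu
      · exact ⟨τ, hT, hu ▸ hμ τ⟩
      · exact (hτ rfl).elim
    · simp at hτ
  · rintro ⟨τ, hT, hu⟩
    rw [Finset.sum_eq_single τ]
    · rw [if_pos hT, hμ' τ u hu, coeff_monomial, if_pos rfl]
      rcases Int.units_eq_one_or (Equiv.Perm.sign τ) with hs | hs <;> simp [hs]
    · intro τ' _ hne
      split_ifs with hT'
      · rw [coeff_monomial, if_neg]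
        intro hh
        exact hne (mu_inj hT'.1 hT.1 (hh ▸ hμ τ') hu)
      · simp
    · simp

end BSDat

theorem blkSum_succ' (c : ℕ → ℕ) (k : ℕ) : blkSum c (k + 1) = blkSum c k + c (k + 1) := by
  unfold blkSum
  rw [Finset.sum_Icc_succ_top (by omega)]

theorem blkSum_zero' (c : ℕ → ℕ) : blkSum c 0 = 0 := by simp [blkSum]

theorem blkSum_one' (c : ℕ → ℕ) : blkSum c 1 = c 1 := by simp [blkSum]

theorem blkSum_mono' (c : ℕ → ℕ) : Monotone (blkSum c) :=
  monotone_nat_of_le_succ fun k => by rw [blkSum_succ']; omega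

theorem blk_le_iff' {c : ℕ → ℕ} {l a k : ℕ} (ha : a ≤ blkSum c l) :
    blk c a ≤ k ↔ a ≤ blkSum c k := by
  constructor
  · intro h
    have : a ≤ blkSum c (blk c a) := Nat.sInf_mem (s := {j | a ≤ blkSum c j}) ⟨l, ha⟩
    exact this.trans (blkSum_mono' c h)
  · intro h
    exact Nat.sInf_le h

theorem card_fin_lt' {m s : ℕ} (hs : s ≤ m) (p : Fin m → Prop) [DecidablePred p]
    (hp : ∀ j, p j ↔ j.1 < s) : #{j | p j} = s := by
  have : ({j | p j} : Finset (Fin m)) = (univ : Finset (Fin s)).map (Fin.castLEEmb hs) := by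
    ext j
    simp only [mem_filter, mem_univ, true_and, mem_map, Fin.castLEEmb_apply, hp]
    constructor
    · intro h; exact ⟨⟨j.1, h⟩, by ext; simp⟩
    · rintro ⟨i, rfl⟩; simp
  rw [this, card_map, card_univ, Fintype.card_fin]

theorem card_eq_sub' {m k s t : ℕ} (L : Fin m → ℕ) (h1 : #{j | L j ≤ k + 1} = s)
    (h2 : #{j | L j ≤ k} = t) : #{j | L j = k + 1} = s - t := by
  have : ({j | L j ≤ k + 1} : Finset (Fin m)) =
      ({j | L j ≤ k} : Finset (Fin m)) ∪ ({j | L j = k + 1} : Finset (Fin m)) := by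
    ext j; simp only [mem_filter, mem_univ, true_and, mem_union]; omega
  rw [this, card_union_of_disjoint] at h1
  · omega
  · rw [Finset.disjoint_filter]; intro j _ _ _; omega

section
variable {l : ℕ} (hl : 2 ≤ l) {c : ℕ → ℕ} (hc : ∀ i ∈ Finset.Icc 1 l, 0 < c i)
    (hcl : c l = c 1) {n : ℕ} (hn : n = blkSum c l) {m : ℕ} (hm : m + c 1 = n)
include hl hcl hn hm

theorem m_eq' : m = blkSum c (l - 1) := by
  have := blkSum_succ' c (l - 1)
  rw [Nat.sub_add_cancel (by omega)] at this
  omega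

theorem c_le_m' : c 1 ≤ m := by
  rw [m_eq' hl hcl hn hm, ← blkSum_one' c]
  exact blkSum_mono' c (by omega)

theorem pos_bd' (v : Pos c n) : v.1.2.1 < m ∧ c 1 ≤ v.1.1.1 := by
  obtain ⟨⟨a, b⟩, h1, h2⟩ := v
  simp only at h1 h2 ⊢
  have ha : a.1 + 1 ≤ blkSum c l := by omega
  have hb : b.1 + 1 ≤ blkSum c l := by omega
  have e1 : blk c (a.1 + 1) ≤ l := (blk_le_iff' ha).2 ha
  have e2 : blk c (b.1 + 1) ≤ l - 1 := by omega
  rw [blk_le_iff' hb, ← m_eq' hl hcl hn hm] at e2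
  have e3 : ¬ blk c (b.1 + 1) ≤ 0 := by rw [blk_le_iff' hb, blkSum_zero']; omega
  have e4 : ¬ blk c (a.1 + 1) ≤ 1 := by omega
  rw [blk_le_iff' ha, blkSum_one'] at e4
  omega

theorem cardL' (k : ℕ) (hk : k < l) :
    #{j : Fin m | blk c (j.1 + 1) ≤ k} = blkSum c k := by
  apply card_fin_lt'
  · rw [m_eq' hl hcl hn hm]; exact blkSum_mono' c (by omega)
  · intro j
    rw [blk_le_iff' (l := l) (by omega)]
    omega

theorem cardR' (k : ℕ) (hk : k < l) :
    #{i : Fin m | blk c (i.1 + c 1 + 1) ≤ k} = blkSum c k - c 1 := by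
  apply card_fin_lt'
  · have : blkSum c k ≤ m := by
      rw [m_eq' hl hcl hn hm]; exact blkSum_mono' c (by omega)
    omega
  · intro j
    rw [blk_le_iff' (l := l) (by omega)]
    omega

include hc in
def theDat : BSDat (Fin m) (Pos c n) where
  L j := blk c (j.1 + 1)
  R i := blk c (i.1 + c 1 + 1)
  D i j := i.1 + c 1 = j.1
  r v := ⟨v.1.1.1 - c 1, by
    have := pos_bd' hl hcl hn hm v; have := v.1.1.2; omega⟩
  q v := ⟨v.1.2.1, (pos_bd' hl hcl hn hm v).1⟩
  l := l
  c := c 1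
  cc := c
  hl := hl
  hc := hc 1 (by simp; omega)
  hD i j h := by rw [h]
  hD1 i j j' h h' := by ext; omega
  hD2 i i' j h h' := by ext; omega
  hDc j h := by
    have : ¬ blk c (j.1 + 1) ≤ 1 := by omega
    rw [blk_le_iff' (l := l) (by omega), blkSum_one'] at this
    exact ⟨⟨j.1 - c 1, by omega⟩, by simp only; omega⟩
  hDr i h := by
    have : blk c (i.1 + c 1 + 1) ≤ l - 1 := by omega
    rw [blk_le_iff' (l := l) (by omega), ← m_eq' hl hcl hn hm] at this
    exact ⟨⟨i.1 + c 1, by omega⟩, rfl⟩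
  hL1 j := by
    by_contra h
    have : blk c (j.1 + 1) ≤ 0 := by omega
    rw [blk_le_iff' (l := l) (by omega), blkSum_zero'] at this
    omega
  hLl j := by
    have : blk c (j.1 + 1) ≤ l - 1 := by
      rw [blk_le_iff' (l := l) (by omega), ← m_eq' hl hcl hn hm]; omega
    omega
  hR2 i := by
    by_contra h
    have : blk c (i.1 + c 1 + 1) ≤ 1 := by omega
    rw [blk_le_iff' (l := l) (by omega), blkSum_one'] at this
    omega
  hRl i := by
    rw [blk_le_iff' (l := l) (by omega)]
    omega
  hgap k h1 h2 := by
    rw [cardL' hl hcl hn hm k h2, cardR' hl hcl hn hm k h2]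
    have := blkSum_mono' c h1
    rw [blkSum_one'] at this
    omega
  hcL k h1 h2 := by
    obtain ⟨k, rfl⟩ := Nat.exists_eq_add_of_le' h1.le
    rw [card_eq_sub' _ (cardL' hl hcl hn hm (k + 1) h2) (cardL' hl hcl hn hm k (by omega)),
      blkSum_succ']
    omega
  hcR k h1 h2 := by
    obtain ⟨k, rfl⟩ := Nat.exists_eq_add_of_le' h1.le
    rw [card_eq_sub' _ (cardR' hl hcl hn hm (k + 1) h2) (cardR' hl hcl hn hm k (by omega)),
      blkSum_succ']
    have : blkSum c 1 ≤ blkSum c k := blkSum_mono' c (by omega)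
    rw [blkSum_one'] at this
    omega
  hinj v v' h1 h2 := by
    have b1 := pos_bd' hl hcl hn hm v
    have b2 := pos_bd' hl hcl hn hm v'
    simp only [Fin.mk.injEq] at h1 h2
    apply Subtype.ext
    apply Prod.ext
    · ext; omega
    · ext; omega
  hQ v := by
    have b1 := pos_bd' hl hcl hn hm v
    have := v.2.2
    simp only
    rwa [Nat.sub_add_cancel b1.2]
  hsurj i j h := by
    have hlt : j.1 < i.1 + c 1 := by
      by_contra hge
      have h2 : i.1 + c 1 + 1 ≤ blkSum c (blk c (j.1 + 1)) := by
        have : j.1 + 1 ≤ blkSum c (blk c (j.1 + 1)) :=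
          (blk_le_iff' (l := l) (by omega)).1 le_rfl
        omega
      have := (blk_le_iff' (l := l) (by omega)).2 h2
      omega
    refine ⟨⟨(⟨i.1 + c 1, by omega⟩, ⟨j.1, by omega⟩), ?_, ?_⟩, ?_, ?_⟩
    · simpa using hlt
    · exact h
    · ext; simp
    · rfl

end

/-- Proposition 3.15: if `c_j ≠ c` for all `1 < j < l`, the Benlolo–Sanderson element is
irreducible in the polynomial ring `R = ℂ[x_{ab} : (a,b) ∈ P]`. -/
theorem BS_element_irreducible
    (l : ℕ) (hl : 2 ≤ l) (c : ℕ → ℕ) (hc : ∀ i ∈ Finset.Icc 1 l, 0 < c i)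
    (hcl : c l = c 1) (n : ℕ) (hn : n = blkSum c l) (m : ℕ) (hm : m + c 1 = n)
    (hcne : ∀ j, 1 < j → j < l → c j ≠ c 1) :
    Irreducible (BSf c l n m hm) := by
  let S := theDat hl hc hcl hn hm
  have hd : dBS c l = S.d := by
    change ∑ i ∈ Finset.Icc 1 l, (c i - c 1) = ∑ k ∈ Finset.Ioo 1 l, (c k - c 1)
    symm
    apply Finset.sum_subset Finset.Ioo_subset_Icc_self
    intro x hx hx'
    simp only [Finset.mem_Icc, Finset.mem_Ioo] at hx hx'
    have : x = 1 ∨ x = l := by omega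
    rcases this with rfl | rfl <;> omega
  have hcm := c_le_m' hl hcl hn hm
  have hc1 : 0 < c 1 := hc 1 (by simp; omega)
  have hS : S.Supp (BSf c l n m hm) := by
    unfold BSf
    rw [hd]
    apply BSDat.supp_det
    · intro v
      have b := pos_bd' hl hcl hn hm v
      have e1 : (Fin.cast hm ((S.r v).addNat (c 1)) : Fin n) = v.1.1 := by
        ext; change v.1.1.1 - c 1 + c 1 = _; omega
      have e2 : (Fin.castLE (le_trans (Nat.le_add_right m (c 1)) (le_of_eq hm)) (S.q v) : Fin n)
          = v.1.2 := by
        ext; rfl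
      have e3 : v.1.1 ≠ v.1.2 := v.2.1.ne'
      simp only [Mmat, Matrix.of_apply, e1, e2, if_neg e3, add_zero, genX, dif_pos v.2]
    · intro i j h
      have h : i.1 + c 1 = j.1 := h
      have e1 : (Fin.cast hm (i.addNat (c 1)) : Fin n) =
          Fin.castLE (le_trans (Nat.le_add_right m (c 1)) (le_of_eq hm)) j := by
        ext; exact h
      simp [Mmat, Matrix.of_apply, e1, genX]
    · intro i j h1 h2
      have h1 : ¬ i.1 + c 1 = j.1 := h1
      have h2 : ¬ blk c (j.1 + 1) < blk c (i.1 + c 1 + 1) := h2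
      have e1 : ¬ (Fin.cast hm (i.addNat (c 1)) : Fin n) =
          Fin.castLE (le_trans (Nat.le_add_right m (c 1)) (le_of_eq hm)) j := by
        intro h; exact h1 (congrArg Fin.val h)
      simp only [Mmat, Matrix.of_apply, if_neg e1, add_zero, genX]
      rw [dif_neg, Polynomial.C_0]
      intro h; exact h2 h.2
  refine BSDat.irred hS hcne ?_
  let t : Fin m → Fin m := fun j =>
    if h : c 1 ≤ j.1 then ⟨j.1 - c 1, by omega⟩ else ⟨j.1 + m - c 1, by omega⟩
  have ht : Function.Injective t := by
    intro j j' h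
    simp only [t] at h
    ext
    split_ifs at h <;> simp only [Fin.mk.injEq] at h <;> omega
  refine ⟨Equiv.ofBijective t (Finite.injective_iff_bijective.1 ht), fun j => ?_⟩
  rw [Equiv.ofBijective_apply]
  by_cases h : c 1 ≤ j.1
  · right
    change (t j).1 + c 1 = j.1
    simp only [t, dif_pos h]
    omega
  · left
    change blk c (j.1 + 1) < blk c ((t j).1 + c 1 + 1)
    simp only [t, dif_neg h]
    have e1 : blk c (j.1 + 1) ≤ 1 := by
      rw [blk_le_iff' (l := l) (by omega), blkSum_one']; omega
    have e2 : ¬ blk c (j.1 + m - c 1 + c 1 + 1) ≤ l - 1 := by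
      rw [blk_le_iff' (l := l) (by omega), ← m_eq' hl hcl hn hm]; omega
    omega

end
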